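/- Let S be a nonempty connected spacelike regular surface in Minkowski space 𝕃³ satisfying property 𝒫*. Then S is a closed subset of ℝ³. -/

import Mathlib

noncomputable section

open Module
open scoped RealInnerProductSpace

abbrev E3 : Type := EuclideanSpace ℝ (Fin 3)
abbrev E2 : Type := EuclideanSpace ℝ (Fin 2)

/-- `f : E2 → E3` restricted to the open set `U` is a local parametrization of the
surface `S` around the point `p`: it is smooth, has injective derivative at every
point of `U`, and is a homeomorphism onto its image `f '' U`, which is an open
neighborhood of `p` in `S` for the subspace topology. -/
def IsChartAt (S : Set E3) (p : E3) (f : E2 → E3) (U : Set E2) : Prop :=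
  IsOpen U ∧
  ContDiffOn ℝ (⊤ : ℕ∞) f U ∧
  (∀ u ∈ U, Function.Injective (fderiv ℝ f u)) ∧
  p ∈ f '' U ∧
  (∃ W : Set E3, IsOpen W ∧ f '' U = W ∩ S) ∧
  (∃ φ : U ≃ₜ (f '' U), ∀ u : U, (φ u : E3) = f u)

/-- A regular surface in ℝ³. -/
def IsRegularSurface (S : Set E3) : Prop :=
  ∀ p ∈ S, ∃ f U, IsChartAt S p f U

/-- A plane: a 2-dimensional affine subspace of ℝ³. -/
def IsPlane (Pl : AffineSubspace ℝ E3) : Prop := finrank ℝ Pl.direction = 2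

/-- A line: a 1-dimensional affine subspace of ℝ³. -/
def IsLine (L : AffineSubspace ℝ E3) : Prop := finrank ℝ L.direction = 1

/-- `C` is the circle in the plane `Pl` of center `c` and radius `r ≥ 0`. -/
def IsCircleIn (Pl : AffineSubspace ℝ E3) (c : E3) (r : ℝ) (C : Set E3) : Prop :=
  c ∈ Pl ∧ 0 ≤ r ∧ C = {x ∈ (Pl : Set E3) | ‖x - c‖ = r}

/-- Property 𝒫: every plane meeting `S` meets it in a (possibly degenerate) circle. -/
def PropertyP (S : Set E3) : Prop :=
  ∀ Pl : AffineSubspace ℝ E3, IsPlane Pl → ((Pl : Set E3) ∩ S).Nonempty →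
    ∃ c r, IsCircleIn Pl c r ((Pl : Set E3) ∩ S)

/-- The Minkowski bilinear form ⟨x, y⟩₁ = x₁y₁ + x₂y₂ − x₃y₃ on ℝ³. -/
def mink (x y : E3) : ℝ := x 0 * y 0 + x 1 * y 1 - x 2 * y 2

/-- A spacelike plane: a plane on whose direction the Minkowski form is positive definite. -/
def IsSpacelikePlane (Pl : AffineSubspace ℝ E3) : Prop :=
  IsPlane Pl ∧ ∀ v ∈ Pl.direction, v ≠ 0 → 0 < mink v v

/-- `C` is the circle (for the Minkowski-induced metric) in the spacelike plane `Pl`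
of center `c` and radius `r ≥ 0`. -/
def IsMCircleIn (Pl : AffineSubspace ℝ E3) (c : E3) (r : ℝ) (C : Set E3) : Prop :=
  c ∈ Pl ∧ 0 ≤ r ∧ C = {x ∈ (Pl : Set E3) | mink (x - c) (x - c) = r ^ 2}

/-- Property 𝒫*: every spacelike plane meeting `S` meets it in a (possibly degenerate) circle. -/
def PropertyPStar (S : Set E3) : Prop :=
  ∀ Pl : AffineSubspace ℝ E3, IsSpacelikePlane Pl → ((Pl : Set E3) ∩ S).Nonempty →
    ∃ c r, IsMCircleIn Pl c r ((Pl : Set E3) ∩ S)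

/-- The tangent plane associated to a parametrization `f` at the parameter `u`:
the image of the derivative of `f` at `u`. -/
def TangentPlane (f : E2 → E3) (u : E2) : Submodule ℝ E3 :=
  LinearMap.range (fderiv ℝ f u : E2 →ₗ[ℝ] E3)

/-- A spacelike regular surface in 𝕃³: a regular surface all of whose tangent planes are
2-dimensional subspaces on which the Minkowski form is positive definite. -/
def IsSpacelikeSurface (S : Set E3) : Prop :=
  ∀ p ∈ S, ∃ f U, IsChartAt S p f U ∧
    ∀ u ∈ U, f u = p →
      finrank ℝ (TangentPlane f u) = 2 ∧
      ∀ v ∈ TangentPlane f u, v ≠ 0 → 0 < mink v v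

open Filter Topology

def prj (i : Fin 3) : E3 →L[ℝ] ℝ := EuclideanSpace.proj i

lemma prj_apply (i : Fin 3) (x : E3) : prj i x = x i := rfl

lemma graph_aux (S : Set E3) (hreg : IsSpacelikeSurface S) (s : E3) (hs : s ∈ S) :
    ∃ (g : ℝ × ℝ → ℝ) (a b : ℝ), a ^ 2 + b ^ 2 < 1 ∧ g (s 0, s 1) = s 2 ∧
      HasFDerivAt g (a • ContinuousLinearMap.fst ℝ ℝ ℝ + b • ContinuousLinearMap.snd ℝ ℝ ℝ)
        (s 0, s 1) ∧
      ∀ᶠ y in 𝓝 ((s 0, s 1) : ℝ × ℝ), ContinuousAt g y ∧ (!₂[y.1, y.2, g y] : E3) ∈ S := by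
  obtain ⟨f, U, ⟨hU, hf, hinj, hp, ⟨W, hW, hWS⟩, _⟩, hsp⟩ := hreg s hs
  obtain ⟨u, hu, rfl⟩ := hp
  obtain ⟨-, hpos⟩ := hsp u hu rfl
  have hcd : ContDiffAt ℝ (⊤ : ℕ∞) f u := hf.contDiffAt (hU.mem_nhds hu)
  have hfs : HasStrictFDerivAt f (fderiv ℝ f u) u := hcd.hasStrictFDerivAt (by simp)
  set f' := fderiv ℝ f u with hf'
  let π : E3 →L[ℝ] ℝ × ℝ :=
    (EuclideanSpace.proj (0 : Fin 3)).prod (EuclideanSpace.proj (1 : Fin 3))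
  have hpos' : ∀ v, f' v ≠ 0 → 0 < mink (f' v) (f' v) := fun v hv => hpos _ ⟨v, rfl⟩ hv
  have hAinj : Function.Injective (π ∘L f') := by
    rw [injective_iff_map_eq_zero]
    intro v hv
    have h0 : (f' v) 0 = 0 := congrArg Prod.fst hv
    have h1 : (f' v) 1 = 0 := congrArg Prod.snd hv
    by_contra hne
    have hne' : f' v ≠ 0 := by
      intro h
      exact hne (hinj u hu (by rw [← hf', h, map_zero]))
    have := hpos' v hne'
    unfold mink at this
    rw [h0, h1] at this
    nlinarith [sq_nonneg (f' v 2)]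
  let A : E2 ≃L[ℝ] ℝ × ℝ :=
    (LinearEquiv.ofInjectiveOfFinrankEq ((π ∘L f' : E2 →L[ℝ] ℝ × ℝ) : E2 →ₗ[ℝ] ℝ × ℝ) hAinj
      (by simp)).toContinuousLinearEquiv
  have hA : (A : E2 →L[ℝ] ℝ × ℝ) = π ∘L f' := by ext v <;> rfl
  have hπf : HasStrictFDerivAt (fun x => π (f x)) (A : E2 →L[ℝ] ℝ × ℝ) u := by
    rw [hA]; exact π.hasStrictFDerivAt.comp u hfs
  let inv := hπf.localInverse (fun x => π (f x)) A u
  have hinvu : inv (π (f u)) = u := hπf.localInverse_apply_image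
  have hinvd : HasStrictFDerivAt inv (A.symm : ℝ × ℝ →L[ℝ] E2) (π (f u)) := hπf.to_localInverse
  have hπ : ∀ x : E3, π x = (x 0, x 1) := fun x => rfl
  have hAs : ∀ y, π (f' (A.symm y)) = y := by
    intro y
    have : (A : E2 →L[ℝ] ℝ × ℝ) (A.symm y) = y := A.apply_symm_apply y
    rw [hA] at this; exact this
  set a : ℝ := (f' (A.symm (1, 0))) 2 with ha
  set b : ℝ := (f' (A.symm (0, 1))) 2 with hb
  have hlin : ∀ x y : ℝ, (f' (A.symm (x, y))) 2 = a * x + b * y := by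
    intro x y
    have : ((x, y) : ℝ × ℝ) = x • (1, 0) + y • (0, 1) := by simp
    rw [this, map_add, map_smul, map_smul, map_add, map_smul, map_smul]
    simp [ha, hb, mul_comm]
  refine ⟨fun y => (f (inv y)) 2, a, b, ?_, ?_, ?_, ?_⟩
  · by_cases hab : a = 0 ∧ b = 0
    · rw [hab.1, hab.2]; norm_num
    · have h2 := hlin a b
      have h3 := hAs (a, b)
      rw [hπ, Prod.mk.injEq] at h3
      have hne : f' (A.symm (a, b)) ≠ 0 := by
        intro h
        rw [h] at h3
        exact hab ⟨h3.1.symm, h3.2.symm⟩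
      have := hpos' _ hne
      unfold mink at this
      rw [h2, h3.1, h3.2] at this
      have : 0 < (a ^ 2 + b ^ 2) * (1 - (a ^ 2 + b ^ 2)) := by nlinarith
      have h4 : 0 ≤ a ^ 2 + b ^ 2 := by positivity
      by_contra hh
      push Not at hh
      nlinarith
  · change (f (inv (π (f u)))) 2 = _
    rw [hinvu]
  · have hfs' : HasFDerivAt f f' (inv (π (f u))) := by rw [hinvu]; exact hfs.hasFDerivAt
    have h1 := hfs'.comp (π (f u)) hinvd.hasFDerivAt
    have h2 := (prj 2).hasFDerivAt.comp
      (π (f u)) h1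
    refine h2.congr_fderiv ?_
    ext
    · simp [ha, prj_apply]
    · simp [hb, prj_apply]
  · have e1 : ∀ᶠ y in 𝓝 (π (f u)), ContinuousAt inv y := by
      have : (hπf.toOpenPartialHomeomorph _).target ∈ 𝓝 (π (f u)) :=
        (hπf.toOpenPartialHomeomorph _).open_target.mem_nhds
          hπf.image_mem_toOpenPartialHomeomorph_target
      filter_upwards [this] with y hy
      exact (hπf.toOpenPartialHomeomorph _).continuousAt_symm hy
    have e2 : ∀ᶠ y in 𝓝 (π (f u)), inv y ∈ U := by
      have hc := hinvd.hasFDerivAt.continuousAt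
      exact hc.eventually (by rw [hinvu]; exact hU.mem_nhds hu)
    have e3 : ∀ᶠ y in 𝓝 (π (f u)), π (f (inv y)) = y := hπf.eventually_right_inverse
    change ∀ᶠ y in 𝓝 (π (f u)), _
    filter_upwards [e1, e2, e3] with y h1 h2 h3
    constructor
    · have hfc : ContinuousAt f (inv y) := (hf.continuousOn).continuousAt (hU.mem_nhds h2)
      have h4 : ContinuousAt (fun y => f (inv y)) y := ContinuousAt.comp (f := inv) hfc h1
      exact (prj 2).continuous.continuousAt.comp h4
    · have : (!₂[y.1, y.2, (f (inv y)) 2] : E3) = f (inv y) := by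
        rw [hπ] at h3
        ext i
        fin_cases i
        · exact (congrArg Prod.fst h3).symm
        · exact (congrArg Prod.snd h3).symm
        · simp
      rw [this]
      have : f (inv y) ∈ f '' U := ⟨_, h2, rfl⟩
      rw [hWS] at this
      exact this.2

lemma graph_loc (S : Set E3) (hreg : IsSpacelikeSurface S) (s : E3) (hs : s ∈ S) :
    ∃ (g : ℝ × ℝ → ℝ) (a b : ℝ), a ^ 2 + b ^ 2 < 1 ∧ 
      ∀ ε > 0, ∃ ρ > 0, ∀ x y : ℝ, |x| < ρ → |y| < ρ → 
        ContinuousAt g (s 0 + x, s 1 + y) ∧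
        (!₂[s 0 + x, s 1 + y, g (s 0 + x, s 1 + y)] : E3) ∈ S ∧
        |g (s 0 + x, s 1 + y) - s 2 - (a * x + b * y)| ≤ ε * (|x| + |y|) := by
  obtain ⟨g, a, b, hab, hg, hd, hev⟩ := graph_aux S hreg s hs
  refine ⟨g, a, b, hab, fun ε hε => ?_⟩
  have h1 := (hasFDerivAt_iff_isLittleO.1 hd).def hε
  obtain ⟨ρ, hρ, H⟩ := Metric.eventually_nhds_iff.1 (hev.and h1)
  refine ⟨ρ, hρ, fun x y hx hy => ?_⟩
  have := @H (s 0 + x, s 1 + y) (by 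
    rw [Prod.dist_eq, max_lt_iff]; simp [Real.dist_eq, hx, hy])
  obtain ⟨⟨h2, h3⟩, h4⟩ := this
  refine ⟨h2, h3, ?_⟩
  simp [hg, Real.norm_eq_abs, Prod.norm_def] at h4
  refine h4.trans ?_
  gcongr
  exact max_le (by linarith [abs_nonneg y]) (by linarith [abs_nonneg x])

lemma plane_circle (S : Set E3) (hP : PropertyPStar S) (α β γ : ℝ) (hαβ : α ^ 2 + β ^ 2 < 1)
    (s : E3) (hs : s ∈ S) (hsγ : s 2 = α * s 0 + β * s 1 + γ) :
    ∃ c d R : ℝ, ∀ x : E3, x 2 = α * x 0 + β * x 1 + γ → 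
      (x ∈ S ↔ (x 0 - c) ^ 2 + (x 1 - d) ^ 2 - (α * (x 0 - c) + β * (x 1 - d)) ^ 2 = R) := by
  let ℓ : E3 →ₗ[ℝ] ℝ := 
    (prj 2 : E3 →ₗ[ℝ] ℝ) - 
    (α • (prj 0 : E3 →ₗ[ℝ] ℝ) + 
     β • (prj 1 : E3 →ₗ[ℝ] ℝ))
  have hℓ : ∀ x : E3, ℓ x = x 2 - (α * x 0 + β * x 1) := fun x => rfl
  have hsurj : Function.Surjective ℓ := by
    intro t
    refine ⟨!₂[0, 0, t], ?_⟩
    rw [hℓ]; simp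
  have hmem : ∀ x : E3, x ∈ AffineSubspace.mk' s (LinearMap.ker ℓ) ↔ 
      x 2 = α * x 0 + β * x 1 + γ := by
    intro x
    rw [AffineSubspace.mem_mk', LinearMap.mem_ker, hℓ]
    simp
    constructor <;> intro h <;> linarith
  obtain ⟨c, r, hc, hr, hC⟩ := hP (AffineSubspace.mk' s (LinearMap.ker ℓ)) (by
    constructor
    · unfold IsPlane
      rw [AffineSubspace.direction_mk']
      have := LinearMap.finrank_range_add_finrank_ker ℓ
      rw [LinearMap.range_eq_top.2 hsurj] at this
      simp at this
      omega
    · intro v hv hv0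
      rw [AffineSubspace.direction_mk', LinearMap.mem_ker, hℓ] at hv
      unfold mink
      have h2 : v 2 = α * v 0 + β * v 1 := by linarith
      rw [h2]
      have hne : 0 < v 0 ^ 2 + v 1 ^ 2 := by
        by_contra hh
        have h0 : v 0 = 0 := by nlinarith [sq_nonneg (v 0), sq_nonneg (v 1)]
        have h1 : v 1 = 0 := by nlinarith [sq_nonneg (v 0), sq_nonneg (v 1)]
        apply hv0
        ext i
        fin_cases i
        · simpa using h0
        · simpa using h1
        · simp [h2, h0, h1]
      nlinarith [sq_nonneg (α * v 1 - β * v 0), mul_pos hne (sub_pos.2 hαβ)])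
    ⟨s, AffineSubspace.self_mem_mk' _ _, hs⟩
  rw [hmem] at hc
  refine ⟨c 0, c 1, r ^ 2, fun x hx => ?_⟩
  have h1 : x ∈ ((AffineSubspace.mk' s (LinearMap.ker ℓ) : AffineSubspace ℝ E3) : Set E3) := 
    (hmem x).2 hx
  have h2 : x ∈ S ↔ x ∈ ((AffineSubspace.mk' s (LinearMap.ker ℓ) : AffineSubspace ℝ E3) : Set E3) ∩ S :=
    ⟨fun h => ⟨h1, h⟩, fun h => h.2⟩
  rw [h2, hC]
  have h3 : mink (x - c) (x - c) = 
     (x 0 - c 0) ^ 2 + (x 1 - c 1) ^ 2 - (α * (x 0 - c 0) + β * (x 1 - c 1)) ^ 2 := by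
    unfold mink
    simp only [PiLp.sub_apply]
    rw [hx, hc]; ring
  rw [← h3]
  exact ⟨fun h => h.2, fun h => ⟨h1, h⟩⟩

def qf (α β x y : ℝ) : ℝ := x ^ 2 + y ^ 2 - (α * x + β * y) ^ 2

def dd (α β x0 y0 x1 y1 x2 y2 x3 y3 : ℝ) : ℝ :=
  (qf α β x1 y1 - qf α β x0 y0) * ((x2 - x0) * (y3 - y0) - (y2 - y0) * (x3 - x0))
  - (x1 - x0) * ((qf α β x2 y2 - qf α β x0 y0) * (y3 - y0)
      - (y2 - y0) * (qf α β x3 y3 - qf α β x0 y0))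
  + (y1 - y0) * ((qf α β x2 y2 - qf α β x0 y0) * (x3 - x0)
      - (x2 - x0) * (qf α β x3 y3 - qf α β x0 y0))

lemma qf_lin (α β c d R x y x0 y0 : ℝ) (h : qf α β (x - c) (y - d) = R)
    (h0 : qf α β (x0 - c) (y0 - d) = R) :
    qf α β x y - qf α β x0 y0 = (2 * c - 2 * α * (α * c + β * d)) * (x - x0)
      + (2 * d - 2 * β * (α * c + β * d)) * (y - y0) := by
  unfold qf at *
  linear_combination h - h0

lemma dd_zero (α β c d R x0 y0 x1 y1 x2 y2 x3 y3 : ℝ)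
    (h0 : qf α β (x0 - c) (y0 - d) = R) (h1 : qf α β (x1 - c) (y1 - d) = R)
    (h2 : qf α β (x2 - c) (y2 - d) = R) (h3 : qf α β (x3 - c) (y3 - d) = R) :
    dd α β x0 y0 x1 y1 x2 y2 x3 y3 = 0 := by
  unfold dd
  rw [qf_lin _ _ _ _ _ _ _ _ _ h1 h0, qf_lin _ _ _ _ _ _ _ _ _ h2 h0,
    qf_lin _ _ _ _ _ _ _ _ _ h3 h0]
  ring

lemma dd_conv (α β c d R x0 y0 x1 y1 x2 y2 x3 y3 : ℝ)
    (h0 : qf α β (x0 - c) (y0 - d) = R) (h1 : qf α β (x1 - c) (y1 - d) = R)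
    (h2 : qf α β (x2 - c) (y2 - d) = R) (h3 : dd α β x0 y0 x1 y1 x2 y2 x3 y3 = 0)
    (hnc : (x1 - x0) * (y2 - y0) - (y1 - y0) * (x2 - x0) ≠ 0) :
    qf α β (x3 - c) (y3 - d) = R := by
  unfold dd at h3
  rw [qf_lin _ _ _ _ _ _ _ _ _ h1 h0, qf_lin _ _ _ _ _ _ _ _ _ h2 h0] at h3
  have : ((x1 - x0) * (y2 - y0) - (y1 - y0) * (x2 - x0)) * (qf α β (x3 - c) (y3 - d) - R) = 0 := by
    rw [← h0]
    unfold qf at h3 ⊢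
    linear_combination h3
  rcases mul_eq_zero.1 this with h | h
  · exact absurd h hnc
  · linarith

lemma qf_pos (α β : ℝ) (h : α ^ 2 + β ^ 2 < 1) (x y : ℝ) (hq : qf α β x y = 0) :
    x = 0 ∧ y = 0 := by
  unfold qf at hq
  have : (1 - (α ^ 2 + β ^ 2)) * (x ^ 2 + y ^ 2) ≤ 0 := by
    nlinarith [sq_nonneg (α * y - β * x)]
  have h2 : x ^ 2 + y ^ 2 ≤ 0 := by
    by_contra hh
    push Not at hh
    nlinarith [mul_pos (sub_pos.2 h) hh]
  constructor <;> nlinarith [sq_nonneg x, sq_nonneg y]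

lemma key (S : Set E3) (hP : PropertyPStar S) (s q : E3)
    (hq : q ∈ closure S) (g : ℝ × ℝ → ℝ) (a b : ℝ)
    (H : ∀ ε > 0, ∃ ρ > 0, ∀ x y : ℝ, |x| < ρ → |y| < ρ → 
        ContinuousAt g (s 0 + x, s 1 + y) ∧
        (!₂[s 0 + x, s 1 + y, g (s 0 + x, s 1 + y)] : E3) ∈ S ∧
        |g (s 0 + x, s 1 + y) - s 2 - (a * x + b * y)| ≤ ε * (|x| + |y|))
    (α β γ : ℝ) (hαβ : α ^ 2 + β ^ 2 < 1)
    (hs : s 2 = α * s 0 + β * s 1 + γ) (hqγ : q 2 = α * q 0 + β * q 1 + γ)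
    (hne : ¬ (a = α ∧ b = β)) : q ∈ S := by
  obtain ⟨m, hm⟩ : ∃ m, m = a - α := ⟨_, rfl⟩
  obtain ⟨l, hl⟩ : ∃ l, l = b - β := ⟨_, rfl⟩
  have hN : 0 < m ^ 2 + l ^ 2 := by
    by_contra hh
    apply hne
    have h1 : m = 0 := by nlinarith [sq_nonneg m, sq_nonneg l]
    have h2 : l = 0 := by nlinarith [sq_nonneg m, sq_nonneg l]
    constructor <;> linarith
  obtain ⟨N, hNd⟩ : ∃ N, N = m ^ 2 + l ^ 2 := ⟨_, rfl⟩
  obtain ⟨M, hM⟩ : ∃ M, M = |m| + |l| + 1 := ⟨_, rfl⟩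
  have hM0 : 0 < M := by rw [hM]; positivity
  rw [← hNd] at hN
  obtain ⟨ρ, hρ, H⟩ := H (N / (4 * M)) (by positivity)
  obtain ⟨δ, hδ0, hδ⟩ : ∃ δ > 0, δ * M < ρ := 
    ⟨ρ / (2 * M), by positivity, by field_simp; norm_num⟩
  let X : ℝ → ℝ → ℝ := fun j t => δ * (-j * l + t * m)
  let Y : ℝ → ℝ → ℝ := fun j t => δ * (j * m + t * l)
  let Z : ℝ → ℝ → ℝ := fun j t => g (s 0 + X j t, s 1 + Y j t)
  let G : ℝ → ℝ → ℝ := fun j t => Z j t - α * (s 0 + X j t) - β * (s 1 + Y j t) - γ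
  have hXY : ∀ j t : ℝ, |j| ≤ 1 → |t| ≤ 1 → |X j t| ≤ δ * (|m| + |l|) ∧ |Y j t| ≤ δ * (|m| + |l|) := by
    intro j t hj ht
    have e1 : ∀ z w : ℝ, |z| ≤ 1 → |z * w| ≤ |w| := by
      intro z w hz; rw [abs_mul]; exact mul_le_of_le_one_left (abs_nonneg _) hz
    constructor
    · simp only [X]; rw [abs_mul, abs_of_pos hδ0]
      gcongr
      refine (abs_add_le _ _).trans ?_
      have := e1 (-j) l (by simpa using hj)
      have := e1 t m ht
      linarith
    · simp only [Y]; rw [abs_mul, abs_of_pos hδ0]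
      gcongr
      refine (abs_add_le _ _).trans ?_
      have := e1 j m hj
      have := e1 t l ht
      linarith
  have hH : ∀ j t : ℝ, |j| ≤ 1 → |t| ≤ 1 → ContinuousAt g (s 0 + X j t, s 1 + Y j t) ∧
        (!₂[s 0 + X j t, s 1 + Y j t, Z j t] : E3) ∈ S ∧ |G j t - δ * t * N| ≤ δ * N / 2 := by
    intro j t hj ht
    obtain ⟨hx, hy⟩ := hXY j t hj ht
    have hlt : δ * (|m| + |l|) < ρ := by nlinarith
    obtain ⟨h1, h2, h3⟩ := H (X j t) (Y j t) (by linarith) (by linarith)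
    refine ⟨h1, h2, ?_⟩
    have e : G j t - δ * t * N = 
      g (s 0 + X j t, s 1 + Y j t) - s 2 - (a * X j t + b * Y j t) := by
      simp only [G, Z, X, Y]
      rw [hs, hNd, hm, hl]; ring
    rw [e]
    refine h3.trans ?_
    have : |X j t| + |Y j t| ≤ 2 * δ * M := by nlinarith
    calc N / (4 * M) * (|X j t| + |Y j t|) ≤ N / (4 * M) * (2 * δ * M) := by gcongr
      _ = δ * N / 2 := by field_simp; norm_num
  have hXc : ∀ j, Continuous (X j) := fun j => by simp only [X]; fun_prop
  have hYc : ∀ j, Continuous (Y j) := fun j => by simp only [Y]; fun_prop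
  have hGc : ∀ j : ℝ, |j| ≤ 1 → ContinuousOn (G j) (Set.Icc (-1) 1) := by
    intro j hj t ht
    apply ContinuousAt.continuousWithinAt
    obtain ⟨h1, -, -⟩ := hH j t hj (abs_le.2 ht)
    have h2 : ContinuousAt (fun t => (s 0 + X j t, s 1 + Y j t)) t := by
      have := hXc j; have := hYc j
      fun_prop
    have h3 : ContinuousAt (Z j) t := ContinuousAt.comp (f := fun t => (s 0 + X j t, s 1 + Y j t)) h1 h2
    have := (hXc j).continuousAt (x := t)
    have := (hYc j).continuousAt (x := t)
    simp only [G]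
    fun_prop
  have hIVT : ∀ j : ℝ, |j| ≤ 1 → ∀ e : ℝ, |e| ≤ δ * N / 2 → ∃ t ∈ Set.Icc (-1 : ℝ) 1, G j t = e := by
    intro j hj e he
    have h1 := (abs_le.1 (hH j 1 hj (by simp)).2.2)
    have h2 := (abs_le.1 (hH j (-1) hj (by simp)).2.2)
    have he := abs_le.1 he
    have := intermediate_value_Icc (by norm_num : (-1 : ℝ) ≤ 1) (hGc j hj)
    exact this ⟨by linarith, by linarith⟩
  obtain ⟨p, hpS, hpq⟩ := mem_closure_iff_seq_limit.1 hq
  have hcoord : ∀ i : Fin 3, Tendsto (fun n => p n i) atTop (𝓝 (q i)) := fun i =>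
    ((prj i).continuous.tendsto q).comp hpq
  let e : ℕ → ℝ := fun n => p n 2 - α * p n 0 - β * p n 1 - γ
  have he : Tendsto e atTop (𝓝 0) := by
    have : Tendsto e atTop (𝓝 (q 2 - α * q 0 - β * q 1 - γ)) := 
      (((hcoord 2).sub ((hcoord 0).const_mul α)).sub ((hcoord 1).const_mul β)).sub_const γ
    rwa [show q 2 - α * q 0 - β * q 1 - γ = 0 by linarith] at this
  have hev : ∀ᶠ n in atTop, |e n| ≤ δ * N / 2 := by
    have h := he.abs
    rw [abs_zero] at h
    exact h.eventually_le_const (by positivity)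
  obtain ⟨n0, hn0⟩ := eventually_atTop.1 hev
  have hch : ∀ n, ∃ t : ℝ × ℝ × ℝ, t ∈ Set.Icc (-1 : ℝ) 1 ×ˢ Set.Icc (-1 : ℝ) 1 ×ˢ Set.Icc (-1 : ℝ) 1 ∧
      G 0 t.1 = e (n0 + n) ∧ G 1 t.2.1 = e (n0 + n) ∧ G (-1) t.2.2 = e (n0 + n) := by
    intro n
    have h := hn0 (n0 + n) (by omega)
    obtain ⟨t0, h0, h0'⟩ := hIVT 0 (by simp) _ h
    obtain ⟨t1, h1, h1'⟩ := hIVT 1 (by simp) _ h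
    obtain ⟨t2, h2, h2'⟩ := hIVT (-1) (by simp) _ h
    exact ⟨(t0, t1, t2), ⟨h0, h1, h2⟩, h0', h1', h2'⟩
  choose t ht0 ht using hch
  obtain ⟨τ, hτ, φ, hφ, hlim⟩ := 
    (isCompact_Icc.prod (isCompact_Icc.prod isCompact_Icc)).tendsto_subseq ht0
  have hidx : Tendsto (fun n => n0 + φ n) atTop atTop := 
    tendsto_atTop_mono (fun n => Nat.le_add_left _ _) hφ.tendsto_atTop
  have he' : Tendsto (fun n => e (n0 + φ n)) atTop (𝓝 0) := he.comp hidx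
  have l0 : Tendsto (fun n => (t (φ n)).1) atTop (𝓝 τ.1) := (continuous_fst.tendsto _).comp hlim
  have l1 : Tendsto (fun n => (t (φ n)).2.1) atTop (𝓝 τ.2.1) := 
    ((continuous_fst.comp continuous_snd).tendsto _).comp hlim
  have l2 : Tendsto (fun n => (t (φ n)).2.2) atTop (𝓝 τ.2.2) := 
    ((continuous_snd.comp continuous_snd).tendsto _).comp hlim
  have hGz : ∀ (j : ℝ) (r : ℕ → ℝ) (r0 : ℝ), |j| ≤ 1 → (∀ n, r n ∈ Set.Icc (-1 : ℝ) 1) → 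
      r0 ∈ Set.Icc (-1 : ℝ) 1 → Tendsto r atTop (𝓝 r0) → (∀ n, G j (r n) = e (n0 + φ n)) → 
      G j r0 = 0 := by
    intro j r r0 hj hr hr0 hlim hG
    have h1 : Tendsto r atTop (𝓝[Set.Icc (-1) 1] r0) := 
      tendsto_nhdsWithin_iff.2 ⟨hlim, Eventually.of_forall hr⟩
    have h2 : Tendsto (fun n => G j (r n)) atTop (𝓝 (G j r0)) := (hGc j hj r0 hr0).tendsto.comp h1
    simp only [hG] at h2
    exact tendsto_nhds_unique h2 he'
  have z0 := hGz 0 _ _ (by simp) (fun n => (ht0 (φ n)).1) hτ.1 l0 (fun n => (ht (φ n)).1)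
  have z1 := hGz 1 _ _ (by simp) (fun n => (ht0 (φ n)).2.1) hτ.2.1 l1 (fun n => (ht (φ n)).2.1)
  have z2 := hGz (-1) _ _ (by simp) (fun n => (ht0 (φ n)).2.2) hτ.2.2 l2 (fun n => (ht (φ n)).2.2)
  -- determinants vanish
  have hdn : ∀ n, dd α β (s 0 + X 0 (t (φ n)).1) (s 1 + Y 0 (t (φ n)).1)
      (s 0 + X 1 (t (φ n)).2.1) (s 1 + Y 1 (t (φ n)).2.1)
      (s 0 + X (-1) (t (φ n)).2.2) (s 1 + Y (-1) (t (φ n)).2.2)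
      (p (n0 + φ n) 0) (p (n0 + φ n) 1) = 0 := by
    intro n
    obtain ⟨c, d, R, hC⟩ := plane_circle S hP α β (γ + e (n0 + φ n)) hαβ (p (n0 + φ n)) (hpS _)
      (by simp only [e]; ring)
    have hmem : ∀ j r : ℝ, |j| ≤ 1 → r ∈ Set.Icc (-1 : ℝ) 1 → G j r = e (n0 + φ n) → 
        qf α β (s 0 + X j r - c) (s 1 + Y j r - d) = R := by
      intro j r hj hr hG
      have := (hC !₂[s 0 + X j r, s 1 + Y j r, Z j r] (by 
        rw [← hG]; simp [G])).1 (hH j r hj (abs_le.2 hr)).2.1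
      simpa [qf] using this
    apply dd_zero α β c d R
    · exact hmem _ _ (by simp) (ht0 (φ n)).1 (ht (φ n)).1
    · exact hmem _ _ (by simp) (ht0 (φ n)).2.1 (ht (φ n)).2.1
    · exact hmem _ _ (by simp) (ht0 (φ n)).2.2 (ht (φ n)).2.2
    · exact (hC (p (n0 + φ n)) (by simp only [e]; ring)).1 (hpS _)
  have hdlim : dd α β (s 0 + X 0 τ.1) (s 1 + Y 0 τ.1)
      (s 0 + X 1 τ.2.1) (s 1 + Y 1 τ.2.1)
      (s 0 + X (-1) τ.2.2) (s 1 + Y (-1) τ.2.2) (q 0) (q 1) = 0 := by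
    have hcont : Continuous (fun w : (ℝ × ℝ × ℝ) × ℝ × ℝ => 
      dd α β (s 0 + X 0 w.1.1) (s 1 + Y 0 w.1.1)
      (s 0 + X 1 w.1.2.1) (s 1 + Y 1 w.1.2.1)
      (s 0 + X (-1) w.1.2.2) (s 1 + Y (-1) w.1.2.2) w.2.1 w.2.2) := by
      simp only [dd, qf, X, Y]
      fun_prop
    have h1 : Tendsto (fun n => (t (φ n), p (n0 + φ n) 0, p (n0 + φ n) 1)) atTop 
        (𝓝 (τ, q 0, q 1)) := 
      hlim.prodMk_nhds (((hcoord 0).comp hidx).prodMk_nhds ((hcoord 1).comp hidx))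
    have h2 := (hcont.tendsto (τ, q 0, q 1)).comp h1
    refine tendsto_nhds_unique h2 ?_
    refine tendsto_const_nhds.congr (fun n => ?_)
    exact (hdn n).symm
  -- the limiting circle
  have hmem0 : ∀ j r : ℝ, |j| ≤ 1 → r ∈ Set.Icc (-1 : ℝ) 1 → 
      (!₂[s 0 + X j r, s 1 + Y j r, Z j r] : E3) ∈ S := fun j r hj hr => 
        (hH j r hj (abs_le.2 hr)).2.1
  obtain ⟨c, d, R, hC⟩ := plane_circle S hP α β γ hαβ _ (hmem0 0 τ.1 (by simp) hτ.1)
    (by simp [G] at z0 ⊢; linarith)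
  have hmem : ∀ j r : ℝ, |j| ≤ 1 → r ∈ Set.Icc (-1 : ℝ) 1 → G j r = 0 → 
        qf α β (s 0 + X j r - c) (s 1 + Y j r - d) = R := by
    intro j r hj hr hG
    have := (hC !₂[s 0 + X j r, s 1 + Y j r, Z j r] (by 
        simp [G] at hG ⊢; linarith)).1 (hmem0 j r hj hr)
    simpa [qf] using this
  have c0 := hmem 0 _ (by simp) hτ.1 z0
  have c1 := hmem 1 _ (by simp) hτ.2.1 z1
  have c2 := hmem (-1) _ (by simp) hτ.2.2 z2
  refine (hC q hqγ).2 ?_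
  refine dd_conv α β c d R _ _ _ _ _ _ _ _ c0 c1 c2 hdlim ?_
  intro hcol
  have hsum : (δ * δ * N) * (τ.2.2 - τ.1 + (τ.2.1 - τ.1)) = 0 := by
    simp only [X, Y] at hcol
    rw [hNd]
    linear_combination -hcol
  have hsum' : τ.2.2 - τ.1 + (τ.2.1 - τ.1) = 0 := by
    rcases mul_eq_zero.1 hsum with h | h
    · exact absurd h (by positivity)
    · exact h
  have h22 : τ.2.2 = 2 * τ.1 - τ.2.1 := by linarith
  have hz : qf α β (X 1 τ.2.1 - X 0 τ.1) (Y 1 τ.2.1 - Y 0 τ.1) = 0 := by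
    rw [h22] at c2
    simp only [qf, X, Y] at c0 c1 c2 ⊢
    linear_combination (c1 + c2) / 2 - c0
  obtain ⟨hz1, hz2⟩ := qf_pos α β hαβ _ _ hz
  have : δ * N = 0 := by
    simp only [X, Y] at hz1 hz2
    rw [hNd]
    linear_combination m * hz2 - l * hz1
  exact absurd this (by positivity)

lemma causal (S : Set E3) (hreg : IsSpacelikeSurface S) (hP : PropertyPStar S) (q : E3)
    (hq : q ∈ closure S) (hqS : q ∉ S) (s : E3) (hs : s ∈ S) :
    (s 0 - q 0) ^ 2 + (s 1 - q 1) ^ 2 ≤ (s 2 - q 2) ^ 2 := by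
  by_contra hcon
  push Not at hcon
  obtain ⟨g, a, b, hab, H⟩ := graph_loc S hreg s hs
  obtain ⟨x, hx⟩ : ∃ x, x = s 0 - q 0 := ⟨_, rfl⟩
  obtain ⟨y, hy⟩ : ∃ y, y = s 1 - q 1 := ⟨_, rfl⟩
  obtain ⟨z, hz⟩ : ∃ z, z = s 2 - q 2 := ⟨_, rfl⟩
  rw [← hx, ← hy, ← hz] at hcon
  obtain ⟨n, hn⟩ : ∃ n, n = x ^ 2 + y ^ 2 := ⟨_, rfl⟩
  have hn0 : 0 < n := by rw [hn]; nlinarith [sq_nonneg z]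
  have main : ∀ τ : ℝ, (z / n * x - τ * y) ^ 2 + (z / n * y + τ * x) ^ 2 < 1 → 
      a = z / n * x - τ * y ∧ b = z / n * y + τ * x := by
    intro τ hτ
    by_contra hne
    apply hqS
    have hzz : (z / n * x - τ * y) * x + (z / n * y + τ * x) * y = z := by
      have : (z / n * x - τ * y) * x + (z / n * y + τ * x) * y = z / n * (x ^ 2 + y ^ 2) := by ring
      rw [this, ← hn]; field_simp
    refine key S hP s q hq g a b H (z / n * x - τ * y) (z / n * y + τ * x)
      (s 2 - (z / n * x - τ * y) * s 0 - (z / n * y + τ * x) * s 1) hτ (by ring) ?_ hne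
    have e0 : q 0 = s 0 - x := by linarith
    have e1 : q 1 = s 1 - y := by linarith
    have e2 : q 2 = s 2 - z := by linarith
    rw [e0, e1, e2]
    linear_combination hzz
  have hnorm : ∀ τ : ℝ, (z / n * x - τ * y) ^ 2 + (z / n * y + τ * x) ^ 2 = 
      z ^ 2 / n + τ ^ 2 * n := by
    intro τ
    have : (z / n * x - τ * y) ^ 2 + (z / n * y + τ * x) ^ 2 = 
      (z / n) ^ 2 * (x ^ 2 + y ^ 2) + τ ^ 2 * (x ^ 2 + y ^ 2) := by ring
    rw [this, ← hn]; field_simp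
  have hzn : z ^ 2 / n < 1 := by rw [div_lt_one hn0, hn]; exact hcon
  have A0 := main 0 (by rw [hnorm]; simpa using hzn)
  obtain ⟨τ, hτ0, hτ⟩ : ∃ τ > 0, z ^ 2 / n + τ ^ 2 * n < 1 := by
    refine ⟨Real.sqrt ((1 - z ^ 2 / n) / (2 * n)), Real.sqrt_pos.2 ?_, ?_⟩
    · have : 0 < 1 - z ^ 2 / n := by linarith
      positivity
    · rw [Real.sq_sqrt]
      · have : (1 - z ^ 2 / n) / (2 * n) * n = (1 - z ^ 2 / n) / 2 := by field_simp
        rw [this]; linarith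
      · have : 0 < 1 - z ^ 2 / n := by linarith
        positivity
  have A1 := main τ (by rw [hnorm]; exact hτ)
  have hy0 : τ * y = 0 := by linarith [A0.1, A1.1]
  have hx0 : τ * x = 0 := by linarith [A0.2, A1.2]
  have : y = 0 := by simpa [hτ0.ne'] using hy0
  have : x = 0 := by simpa [hτ0.ne'] using hx0
  subst_vars
  nlinarith

lemma move (S : Set E3) (hreg : IsSpacelikeSurface S) (s : E3) (hs : s ∈ S) (v w : ℝ)
    (hvw : v ^ 2 + w ^ 2 = 1) (δ : ℝ) (hδ : 0 < δ) :
    ∃ ε z : ℝ, 0 < ε ∧ ε < δ ∧ (!₂[s 0 + ε * v, s 1 + ε * w, z] : E3) ∈ S ∧ |z - s 2| < ε := by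
  obtain ⟨g, a, b, hab, H⟩ := graph_loc S hreg s hs
  have hκ : |a * v + b * w| < 1 := by
    rw [← sq_lt_one_iff_abs_lt_one]
    nlinarith [sq_nonneg (a * w - b * v)]
  obtain ⟨κ, hκd⟩ : ∃ κ, κ = |a * v + b * w| := ⟨_, rfl⟩
  rw [← hκd] at hκ
  have hv : |v| ≤ 1 := by rw [← sq_le_one_iff_abs_le_one]; nlinarith [sq_nonneg w]
  have hw : |w| ≤ 1 := by rw [← sq_le_one_iff_abs_le_one]; nlinarith [sq_nonneg v]
  obtain ⟨ρ, hρ, H⟩ := H ((1 - κ) / 4) (by linarith)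
  obtain ⟨ε, hε0, hε⟩ : ∃ ε, 0 < ε ∧ ε < min δ ρ := exists_between (lt_min hδ hρ)
  have h1 : |ε * v| ≤ ε := by
    rw [abs_mul, abs_of_pos hε0]; exact mul_le_of_le_one_right hε0.le hv
  have h2 : |ε * w| ≤ ε := by
    rw [abs_mul, abs_of_pos hε0]; exact mul_le_of_le_one_right hε0.le hw
  have hερ : ε < ρ := lt_of_lt_of_le hε (min_le_right _ _)
  obtain ⟨-, h3, h4⟩ := H (ε * v) (ε * w) (by linarith) (by linarith)
  refine ⟨ε, _, hε0, lt_of_lt_of_le hε (min_le_left _ _), h3, ?_⟩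
  have h5 : |a * (ε * v) + b * (ε * w)| = ε * κ := by
    rw [show a * (ε * v) + b * (ε * w) = ε * (a * v + b * w) by ring, abs_mul, abs_of_pos hε0, hκd]
  have h6 := abs_sub_abs_le_abs_sub (g (s 0 + ε * v, s 1 + ε * w) - s 2) (a * (ε * v) + b * (ε * w))
  have h7 : (1 - κ) / 4 * (|ε * v| + |ε * w|) ≤ (1 - κ) / 4 * (2 * ε) := by
    apply mul_le_mul_of_nonneg_left <;> linarith
  nlinarith [mul_pos hε0 (sub_pos.2 hκ)]

lemma fin3_ext {x y : E3} (h0 : x 0 = y 0) (h1 : x 1 = y 1) (h2 : x 2 = y 2) : x = y := by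
  ext i
  fin_cases i
  · exact h0
  · exact h1
  · exact h2

lemma cc (i : Fin 3) : Continuous (fun x : E3 => x i) := (prj i).continuous

lemma final (S : Set E3) (hconn : IsConnected S)
    (hreg : IsSpacelikeSurface S) (hP : PropertyPStar S) (σ : ℝ) (hσ : σ ^ 2 = 1) (q : E3)
    (hq : q ∈ closure S) (hqS : q ∉ S) (hpos : ∀ s ∈ S, 0 < σ * (s 2 - q 2)) : False := by
  have hc0 := cc 0
  have hc1 := cc 1
  have hc2 := cc 2
  let h : E3 → ℝ := fun x => σ * (x 2 - q 2)
  have hh : Continuous h := by simp only [h]; fun_prop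
  have hsq : ∀ t : ℝ, (σ * t) ^ 2 = t ^ 2 := by intro t; rw [mul_pow, hσ, one_mul]
  have habs : |σ| = 1 := by rw [← sq_eq_sq₀ (abs_nonneg _) zero_le_one, sq_abs, hσ]; norm_num
  let Nn : E3 → ℝ := fun x => (x 0 - q 0) ^ 2 + (x 1 - q 1) ^ 2
  have hNn : Continuous Nn := by simp only [Nn]; fun_prop
  have cone : ∀ s ∈ S, Nn s ≤ h s ^ 2 := by
    intro s hs
    simp only [h, hsq]
    exact causal S hreg hP q hq hqS s hs
  have coneC : ∀ x ∈ closure S, 0 ≤ h x ∧ Nn x ≤ h x ^ 2 := by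
    intro x hx
    have hcl : IsClosed {x | 0 ≤ h x ∧ Nn x ≤ h x ^ 2} := 
      (isClosed_le continuous_const hh).inter (isClosed_le hNn (hh.pow 2))
    have hsub : S ⊆ {x | 0 ≤ h x ∧ Nn x ≤ h x ^ 2} := fun s hs => ⟨(hpos s hs).le, cone s hs⟩
    exact closure_minimal hsub hcl hx
  have strict : ∀ s ∈ S, Nn s < h s ^ 2 := by
    intro s hs
    refine lt_of_le_of_ne (cone s hs) (fun heq => ?_)
    have hp : 0 < h s := hpos s hs
    obtain ⟨ε, z, hε0, -, hmem, hz⟩ := move S hreg s hs ((s 0 - q 0) / h s) ((s 1 - q 1) / h s) (by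
      rw [div_pow, div_pow, ← add_div, div_eq_one_iff_eq (by positivity)]
      exact heq) 1 one_pos
    have h1 := cone _ hmem
    have h2 : 0 < σ * (z - q 2) := by simpa using hpos _ hmem
    have h3 : σ * (z - q 2) < h s + ε := by
      have : σ * (z - q 2) = h s + σ * (z - s 2) := by simp only [h]; ring
      rw [this]
      have : |σ * (z - s 2)| < ε := by rw [abs_mul, habs, one_mul]; exact hz
      linarith [le_abs_self (σ * (z - s 2))]
    have h4 : (s 0 + ε * ((s 0 - q 0) / h s) - q 0) ^ 2 + (s 1 + ε * ((s 1 - q 1) / h s) - q 1) ^ 2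
        = (h s + ε) ^ 2 := by
      have : (s 0 + ε * ((s 0 - q 0) / h s) - q 0) ^ 2 + (s 1 + ε * ((s 1 - q 1) / h s) - q 1) ^ 2
        = (1 + ε / h s) ^ 2 * Nn s := by simp only [Nn]; ring
      rw [this, heq]; field_simp
    have h5 : (h s + ε) ^ 2 ≤ (σ * (z - q 2)) ^ 2 := by
      rw [← h4]; simpa [Nn, h] using h1
    nlinarith
  obtain ⟨s0, hs0⟩ := hconn.nonempty
  obtain ⟨b, hb⟩ : ∃ b, b = h s0 / 2 := ⟨_, rfl⟩
  have hs0p : 0 < h s0 := hpos s0 hs0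
  have hb0 : 0 < b := by linarith
  have hhq : h q = 0 := by simp [h]
  have near : ∀ η > 0, ∃ p ∈ S, h p < η := by
    intro η hη
    have : {x | h x < η} ∈ 𝓝 q := (isOpen_lt hh continuous_const).mem_nhds (by simpa [hhq] using hη)
    obtain ⟨p, hp, hpS⟩ := mem_closure_iff_nhds.1 hq _ this
    exact ⟨p, hpS, hp⟩
  let K : Set E3 := closure S ∩ {x | h x ≤ b}
  have hKc : IsClosed K := isClosed_closure.inter (isClosed_le hh continuous_const)
  have hKcomp : IsCompact K := by
    refine (isCompact_closedBall q (2 * b)).of_isClosed_subset hKc ?_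
    rintro x ⟨hx, hxb⟩
    obtain ⟨h1, h2⟩ := coneC x hx
    have hxb : h x ≤ b := hxb
    rw [Metric.mem_closedBall, EuclideanSpace.dist_eq, Real.sqrt_le_left (by positivity)]
    simp only [Fin.sum_univ_three, Real.dist_eq, sq_abs]
    have h3 : (x 2 - q 2) ^ 2 = h x ^ 2 := by simp only [h]; rw [hsq]
    have h4 : (x 0 - q 0) ^ 2 + (x 1 - q 1) ^ 2 ≤ h x ^ 2 := h2
    nlinarith
  have hKS : ∀ x ∈ K, x ≠ q → x ∈ S := by
    rintro x ⟨hx, hxb⟩ hxq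
    have hxb : h x ≤ b := hxb
    by_contra hxS
    obtain ⟨h1, h2⟩ := coneC x hx
    have h3 : 0 < h x := by
      refine lt_of_le_of_ne h1 (fun h0 => hxq ?_)
      rw [← h0] at h2
      have h4 : (x 0 - q 0) ^ 2 + (x 1 - q 1) ^ 2 ≤ 0 := by simpa [Nn] using h2
      have h5 : (x 2 - q 2) ^ 2 = 0 := by rw [← hsq]; change h x ^ 2 = 0; rw [← h0]; norm_num
      apply fin3_ext
      · nlinarith [sq_nonneg (x 0 - q 0), sq_nonneg (x 1 - q 1)]
      · nlinarith [sq_nonneg (x 0 - q 0), sq_nonneg (x 1 - q 1)]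
      · nlinarith
    obtain ⟨p, hpS, hp⟩ := near _ h3
    obtain ⟨s, hs, hsx⟩ := hconn.isPreconnected.intermediate_value hpS hs0 hh.continuousOn
      (show h x ∈ Set.Icc (h p) (h s0) from ⟨hp.le, by linarith⟩)
    have h6 := causal S hreg hP x hx hxS s hs
    have h7 : s 2 - x 2 = 0 := by
      have : σ * (s 2 - x 2) = 0 := by simp only [h] at hsx; linear_combination hsx
      rw [← sq_eq_zero_iff, ← hsq, this]; norm_num
    rw [h7] at h6
    apply hxS
    have : x = s := by
      apply fin3_ext
      · nlinarith [sq_nonneg (s 0 - x 0), sq_nonneg (s 1 - x 1)]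
      · nlinarith [sq_nonneg (s 0 - x 0), sq_nonneg (s 1 - x 1)]
      · linarith
    rw [this]; exact hs
  obtain ⟨M, hM0, hMb, hM⟩ : ∃ M, 0 ≤ M ∧ M < b ∧ ∀ x ∈ K, h x = b → Nn x ≤ M ^ 2 := by
    have hKb : IsCompact (K ∩ {x | h x = b}) := hKcomp.inter_right (isClosed_eq hh continuous_const)
    rcases (K ∩ {x | h x = b}).eq_empty_or_nonempty with he | hne
    · refine ⟨0, le_rfl, hb0, fun x hx hxb => ?_⟩
      have : x ∈ K ∩ {x | h x = b} := ⟨hx, hxb⟩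
      rw [he] at this; exact this.elim
    · obtain ⟨x, ⟨hx, hxb⟩, hmax⟩ := hKb.exists_isMaxOn hne hNn.continuousOn
      have hxb : h x = b := hxb
      have hN0 : 0 ≤ Nn x := by simp only [Nn]; positivity
      refine ⟨Real.sqrt (Nn x), Real.sqrt_nonneg _, ?_, fun y hy hyb => ?_⟩
      · rw [Real.sqrt_lt hN0 hb0.le, ← hxb]
        apply strict x (hKS x hx _)
        rintro rfl
        linarith
      · rw [Real.sq_sqrt hN0]; exact hmax ⟨hy, hyb⟩
  obtain ⟨p, hpS, hpM⟩ := near (b - M) (by linarith)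
  obtain ⟨w, hw, hwp⟩ : ∃ w : ℝ, w ^ 2 = 1 ∧ 0 ≤ w * (p 0 - q 0) := by
    rcases le_total 0 (p 0 - q 0) with h1 | h1
    · exact ⟨1, by norm_num, by linarith⟩
    · exact ⟨-1, by norm_num, by linarith⟩
  let P : Set E3 := K ∩ {x | x 1 = p 1 ∧ 0 ≤ w * (x 0 - p 0) ∧ h x ≤ h p + w * (x 0 - p 0)}
  have hPcomp : IsCompact P := by
    refine hKcomp.inter_right ?_
    have i1 : IsClosed {x : E3 | x 1 = p 1} := isClosed_eq hc1 continuous_const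
    have i2 : IsClosed {x : E3 | 0 ≤ w * (x 0 - p 0)} :=
      isClosed_le continuous_const (by fun_prop)
    have i3 : IsClosed {x : E3 | h x ≤ h p + w * (x 0 - p 0)} := isClosed_le hh (by fun_prop)
    exact i1.inter (i2.inter i3)
  have hpP : p ∈ P := by
    refine ⟨⟨subset_closure hpS, ?_⟩, rfl, by simp, by simp⟩
    change h p ≤ b
    linarith
  have hmax : ∃ x ∈ P, x ≠ q ∧ ∀ y ∈ P, w * y 0 ≤ w * x 0 := by
    obtain ⟨x, hx, hxmax⟩ := hPcomp.exists_isMaxOn ⟨p, hpP⟩ 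
      (f := fun x : E3 => w * x 0) (by fun_prop)
    by_cases hxq : x = q
    · refine ⟨p, hpP, fun h => hqS (h ▸ hpS), fun y hy => ?_⟩
      have h1 : w * y 0 ≤ w * x 0 := hxmax hy
      rw [hxq] at h1
      linarith
    · exact ⟨x, hx, hxq, fun y hy => hxmax hy⟩
  obtain ⟨x, ⟨hxK, hx1, hx2, hx3⟩, hxq, hxmax⟩ := hmax
  have hxS := hKS x hxK hxq
  have hxb : h x ≤ b := hxK.2
  rcases hxb.lt_or_eq with hlt | heq
  · obtain ⟨ε, z, hε0, hε, hmem, hz⟩ := move S hreg x hxS w 0 (by rw [hw]; norm_num) (b - h x) 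
      (by linarith)
    have h3 : σ * (z - q 2) < h x + ε := by
      have : σ * (z - q 2) = h x + σ * (z - x 2) := by simp only [h]; ring
      rw [this]
      have : |σ * (z - x 2)| < ε := by rw [abs_mul, habs, one_mul]; exact hz
      linarith [le_abs_self (σ * (z - x 2))]
    have hw2 : w * (x 0 + ε * w) = w * x 0 + ε := by linear_combination ε * hw
    have := hxmax !₂[x 0 + ε * w, x 1 + ε * 0, z] (by
      refine ⟨⟨subset_closure hmem, ?_⟩, ?_, ?_, ?_⟩
      · change σ * (z - q 2) ≤ b
        linarith
      · simpa using hx1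
      · change 0 ≤ w * (x 0 + ε * w - p 0)
        linarith
      · change σ * (z - q 2) ≤ h p + w * (x 0 + ε * w - p 0)
        linarith)
    have h4 : w * (x 0 + ε * w) ≤ w * x 0 := this
    linarith
  · have h1 := hM x hxK heq
    have h2 : M < w * (x 0 - q 0) := by linarith
    have h4 : (w * (x 0 - q 0)) ^ 2 ≤ Nn x := by
      rw [mul_pow, hw]; simp only [Nn]; nlinarith [sq_nonneg (x 1 - q 1)]
    nlinarith

/-- A nonempty connected spacelike regular surface in 𝕃³ satisfying
property 𝒫* is a closed subset of ℝ³. -/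
theorem spacelike_surface_closed (S : Set E3) (hne : S.Nonempty) (hconn : IsConnected S)
    (hreg : IsSpacelikeSurface S) (hP : PropertyPStar S) :
    IsClosed S := by
  by_contra hcl
  have : ¬ closure S ⊆ S := fun h => hcl (closure_subset_iff_isClosed.1 h)
  obtain ⟨q, hq, hqS⟩ := Set.not_subset.1 this
  have hne2 : ∀ s ∈ S, s 2 ≠ q 2 := by
    intro s hs heq
    have h1 := causal S hreg hP q hq hqS s hs
    rw [heq] at h1
    apply hqS
    have : q = s := by
      apply fin3_ext
      · nlinarith [sq_nonneg (s 0 - q 0), sq_nonneg (s 1 - q 1)]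
      · nlinarith [sq_nonneg (s 0 - q 0), sq_nonneg (s 1 - q 1)]
      · exact heq.symm
    rw [this]; exact hs
  by_cases hpos : ∀ s ∈ S, q 2 < s 2
  · exact final S hconn hreg hP 1 (by norm_num) q hq hqS (fun s hs => by linarith [hpos s hs])
  · push Not at hpos
    obtain ⟨s1, hs1, hs1q⟩ := hpos
    refine final S hconn hreg hP (-1) (by norm_num) q hq hqS (fun s hs => ?_)
    by_contra hcon
    obtain ⟨x, hx, hxq⟩ := hconn.isPreconnected.intermediate_value hs1 hs (cc 2).continuousOn
      (show q 2 ∈ Set.Icc (s1 2) (s 2) from ⟨hs1q, by linarith⟩)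
    exact hne2 x hx hxq
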